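/- arXiv:1001.3750 — 4 statements merged into one kernel-verified Lean document; each statement's English description precedes it below -/
import Mathlib

section
/- Let G be a group and g ∈ G such that (N): the normal closure of {g} in G is all of G, and (A): the abelianization of G is infinite cyclic, generated by the image of g. Let P = G × Z be the direct product of G with a multiplicatively written infinite cyclic group Z with generator z. For any integer d, let N be the normal closure in P of the single element g·z^d. Then P/N is infinite cyclic, with the image of z as a generator. -/
/-!
For a homomorphism `f : G →* A` into a commutative group, the graph of `f` is the kernel of the
split surjection `(x, a) ↦ a / f x` from `G × A` onto `A`. If `g` normally generates `G`, then
`(g, f g)` normally generates the graph, because `x ↦ (x, f x)` carries the normal closure of `g`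
into that of `(g, f g)`. The relator `g * z ^ d` has this form, `f` being the `d`-th power of the
abelianization map.
-/

section Graph

variable {G H A : Type*} [Group G] [Group H] [CommGroup A]

theorem graph_le_normalClosure_graphOn (f : G →* H) {S : Set G}
    (hS : Subgroup.normalClosure S = ⊤) :
    f.graph ≤ Subgroup.normalClosure (S.graphOn f) := by
  have le_comap : Subgroup.normalClosure S ≤
      (Subgroup.normalClosure (S.graphOn f)).comap ((MonoidHom.id G).prod f) :=
    Subgroup.normalClosure_le_normal fun _ hx =>
      Subgroup.subset_normalClosure (Set.mem_image_of_mem _ hx)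
  rw [f.graph_eq_range_prod, MonoidHom.range_eq_map, ← hS]
  exact Subgroup.map_le_iff_le_comap.2 le_comap

/-- The homomorphism `(x, a) ↦ a / f x`, measuring how far a point of `G × A` lies above the graph
of `f`. It identifies the quotient of `G × A` by the graph with `A`. -/
def heightAboveGraph (f : G →* A) : G × A →* A :=
  MonoidHom.snd G A / f.comp (MonoidHom.fst G A)

theorem heightAboveGraph_apply (f : G →* A) (p : G × A) :
    heightAboveGraph f p = p.2 / f p.1 :=
  rfl

theorem heightAboveGraph_one_left (f : G →* A) (a : A) : heightAboveGraph f (1, a) = a := by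
  simp [heightAboveGraph_apply]

theorem ker_heightAboveGraph (f : G →* A) : (heightAboveGraph f).ker = f.graph := by
  ext p
  rw [MonoidHom.mem_ker, heightAboveGraph_apply, div_eq_one, MonoidHom.mem_graph, eq_comm]

theorem normalClosure_graphOn_eq_ker (f : G →* A) {S : Set G}
    (hS : Subgroup.normalClosure S = ⊤) :
    Subgroup.normalClosure (S.graphOn f) = (heightAboveGraph f).ker := by
  apply le_antisymm
  · apply Subgroup.normalClosure_le_normal
    rw [ker_heightAboveGraph]
    rintro _ ⟨x, -, rfl⟩
    exact MonoidHom.mem_graph.2 rfl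
  · exact (ker_heightAboveGraph f).trans_le (graph_le_normalClosure_graphOn f hS)

theorem exists_quotient_normalClosure_graphOn_mulEquiv (f : G →* A) {S : Set G}
    (hS : Subgroup.normalClosure S = ⊤) :
    ∃ e : (G × A) ⧸ Subgroup.normalClosure (S.graphOn f) ≃* A,
      ∀ a : A, e (QuotientGroup.mk (1, a)) = a :=
  ⟨(QuotientGroup.quotientMulEquivOfEq (normalClosure_graphOn_eq_ker f hS)).trans
    (QuotientGroup.quotientKerEquivOfRightInverse _ _ (heightAboveGraph_one_left f)),
    heightAboveGraph_one_left f⟩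

theorem quotient_by_normalClosure_of_meridian_relator_infinite_cyclic_general
    (g : G) (hN : Subgroup.normalClosure ({g} : Set G) = ⊤) (z : A) (d : ℤ)
    (f : G →* A) (hf : f g = z ^ d) :
    ∃ e : (G × A) ⧸ Subgroup.normalClosure
        ({(g, (1 : A)) * ((1 : G), z) ^ d} : Set (G × A)) ≃* A,
      ∀ a : A, e (QuotientGroup.mk (1, a)) = a := by
  have relator_eq : (g, (1 : A)) * ((1 : G), z) ^ d = (g, f g) := by
    ext <;> simp [hf]
  rw [relator_eq, ← Set.graphOn_singleton]
  exact exists_quotient_normalClosure_graphOn_mulEquiv f hN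

end Graph

/-- If `g` normally generates `G` and the abelianization of `G` is
infinite cyclic generated by the image of `g`, then for `P = G × ℤ` (with central
generator `z` of the `ℤ` factor) and `N` the normal closure in `P` of `g·z^d`,
the quotient `P/N` is infinite cyclic, with the image of `z` as a generator. -/
theorem quotient_by_normalClosure_of_meridian_relator_infinite_cyclic
    {G : Type*} [Group G] (g : G)
    (hN : Subgroup.normalClosure ({g} : Set G) = ⊤)
    (hA : ∃ e : Abelianization G ≃* Multiplicative ℤ,
      e (Abelianization.of g) = Multiplicative.ofAdd 1)
    (d : ℤ) :
    ∃ e : ((G × Multiplicative ℤ) ⧸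
        Subgroup.normalClosure
          ({((g, (1 : Multiplicative ℤ)) *
              (((1 : G), Multiplicative.ofAdd (1 : ℤ)) : G × Multiplicative ℤ) ^ d)} :
            Set (G × Multiplicative ℤ))) ≃* Multiplicative ℤ,
      e (QuotientGroup.mk (((1 : G), Multiplicative.ofAdd (1 : ℤ)) : G × Multiplicative ℤ)) =
        Multiplicative.ofAdd 1 := by
  obtain ⟨α, hα⟩ := hA
  obtain ⟨e, he⟩ := quotient_by_normalClosure_of_meridian_relator_infinite_cyclic_general g hN _ d
    ((zpowGroupHom d).comp (α.toMonoidHom.comp Abelianization.of)) (congrArg (· ^ d) hα)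
  exact ⟨e, he _⟩
end

section
/- Let G be a group and g ∈ G such that (N): the normal closure of {g} in G is all of G, and (A): the abelianization of G is infinite cyclic, generated by the image of g. Let P = G × Z be the direct product of G with a multiplicatively written infinite cyclic group Z with generator z. Let p, k be integers and q a positive integer with gcd(p+k, q) = 1. Let N be the normal closure in P of the two elements g^q and g^{p+k}·z. Then P/N is cyclic of order q (isomorphic to ℤ/qℤ), with the image of g as a generator. -/
/-!
In the quotient, `g ^ n = z⁻¹` with `n = p + k`, so `g ^ n` is central. Since `g ^ q = 1` and `n`,
`q` are coprime, `g` itself is central. The image of `G` is the whole quotient, because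
`z = g ^ (-n)`, so the quotient is normally generated by the central element `g`, and therefore
cyclic of order dividing `q`. The order is exactly `q` because a character `χ : G → ℤ/q` with
`χ g = 1` extends to `G × ℤ` by `z ↦ -n`, and this extension kills both relators.
-/

section Group

variable {G H : Type*} [Group G] [Group H]

theorem mem_of_zpow_mem_of_isCoprime (K : Subgroup G) {x : G} {m n : ℤ} (hmn : IsCoprime m n)
    (hm : x ^ m ∈ K) (hn : x ^ n ∈ K) : x ∈ K := by
  obtain ⟨a, b, hab⟩ := hmn
  have hx : (x ^ m) ^ a * (x ^ n) ^ b = x := by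
    rw [← zpow_mul, ← zpow_mul, ← zpow_add, mul_comm m, mul_comm n, hab, zpow_one]
  exact hx ▸ mul_mem (zpow_mem hm a) (zpow_mem hn b)

theorem normal_of_le_center {K : Subgroup G} (hK : K ≤ Subgroup.center G) : K.Normal where
  conj_mem x hx y := by
    rwa [Subgroup.mem_center_iff.mp (hK hx) y, mul_inv_cancel_right]

theorem normalClosure_singleton_eq_zpowers {x : G} (hx : x ∈ Subgroup.center G) :
    Subgroup.normalClosure {x} = Subgroup.zpowers x := by
  have : (Subgroup.zpowers x).Normal := normal_of_le_center (Subgroup.zpowers_le.mpr hx)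
  rw [← Subgroup.normalClosure_closure_eq_normalClosure, ← Subgroup.zpowers_eq_closure,
    Subgroup.normalClosure_eq_self]

theorem map_mem_center_of_surjective {f : G →* H} (hf : Function.Surjective f) {x : G}
    (hx : x ∈ Subgroup.center G) : f x ∈ Subgroup.center H := by
  rw [Subgroup.mem_center_iff, hf.forall]
  intro y
  rw [← map_mul, ← map_mul, Subgroup.mem_center_iff.mp hx y]

theorem bijective_of_map_generator_eq_ofAdd_one {q : ℕ} (φ : G →* Multiplicative (ZMod q)) {x : G}
    (hgen : Subgroup.zpowers x = ⊤) (hpow : x ^ q = 1) (hφ : φ x = Multiplicative.ofAdd 1) :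
    Function.Bijective φ := by
  have hφ_zpow (m : ℤ) : φ (x ^ m) = Multiplicative.ofAdd (m : ZMod q) := by
    rw [map_zpow, hφ, ← ofAdd_zsmul, zsmul_one]
  constructor
  · rw [injective_iff_map_eq_one]
    intro y hy
    obtain ⟨m, rfl⟩ := Subgroup.mem_zpowers_iff.mp (hgen ▸ Subgroup.mem_top y)
    rw [hφ_zpow, ofAdd_eq_one, ZMod.intCast_zmod_eq_zero_iff_dvd] at hy
    obtain ⟨c, rfl⟩ := hy
    rw [zpow_mul, zpow_natCast, hpow, one_zpow]
  · intro y
    obtain ⟨m, hm⟩ := ZMod.intCast_surjective y.toAdd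
    exact ⟨x ^ m, by rw [hφ_zpow, hm, ofAdd_toAdd]⟩

end Group

/-- The quotient of `G × ℤ` by the relators `g ^ q` and `g ^ n * z`, where `z` is the generator
of the `ℤ` factor. The twisted gluing of the theorem is the case `n = p + k`. -/
abbrev TwistedQuotient {G : Type*} [Group G] (g : G) (n : ℤ) (q : ℕ) : Type _ :=
  (G × Multiplicative ℤ) ⧸
    Subgroup.normalClosure
      ({(g ^ (q : ℤ), 1), (g ^ n, Multiplicative.ofAdd 1)} : Set (G × Multiplicative ℤ))

namespace TwistedQuotient

variable {G : Type*} [Group G] (g : G) (n : ℤ) (q : ℕ)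

/-- The projection of `G × ℤ` onto the twisted quotient. -/
def proj : G × Multiplicative ℤ →* TwistedQuotient g n q :=
  QuotientGroup.mk' _

theorem proj_surjective : Function.Surjective (proj g n q) :=
  QuotientGroup.mk'_surjective _

/-- The image of `g` in the twisted quotient; for a knot group, the class of the meridian. -/
def meridian : TwistedQuotient g n q :=
  proj g n q (g, 1)

theorem proj_zpow_one (m : ℤ) : proj g n q (g ^ m, 1) = meridian g n q ^ m := by
  rw [meridian, ← map_zpow, Prod.pow_mk, one_zpow]

theorem meridian_pow_eq_one : meridian g n q ^ q = 1 := by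
  rw [← zpow_natCast, ← proj_zpow_one]
  exact (QuotientGroup.eq_one_iff _).mpr (Subgroup.subset_normalClosure (Set.mem_insert _ _))

theorem meridian_zpow_mul_proj_eq_one :
    meridian g n q ^ n * proj g n q (1, Multiplicative.ofAdd 1) = 1 := by
  rw [← proj_zpow_one, ← map_mul, Prod.mk_mul_mk, mul_one, one_mul]
  exact (QuotientGroup.eq_one_iff _).mpr
    (Subgroup.subset_normalClosure (Set.mem_insert_of_mem _ rfl))

theorem proj_one_ofAdd (m : ℤ) :
    proj g n q (1, Multiplicative.ofAdd m) = meridian g n q ^ (-n * m) := by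
  have hz : proj g n q (1, Multiplicative.ofAdd 1) = meridian g n q ^ (-n) := by
    rw [zpow_neg]
    exact eq_inv_of_mul_eq_one_right (meridian_zpow_mul_proj_eq_one g n q)
  rw [zpow_mul, ← hz, ← map_zpow, Prod.pow_mk, one_zpow, ← ofAdd_zsmul, smul_eq_mul, mul_one]

theorem meridian_zpow_mem_center :
    meridian g n q ^ n ∈ Subgroup.center (TwistedQuotient g n q) := by
  have hz : ((1, Multiplicative.ofAdd (-1)) : G × Multiplicative ℤ) ∈ Subgroup.center _ := by
    rw [Subgroup.center_prod, CommGroup.center_eq_top]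
    exact ⟨one_mem _, Subgroup.mem_top _⟩
  have hproj := map_mem_center_of_surjective (proj_surjective g n q) hz
  rwa [proj_one_ofAdd, neg_mul_neg, mul_one] at hproj

theorem meridian_mem_center {n : ℤ} {q : ℕ} (hnq : IsCoprime n q) :
    meridian g n q ∈ Subgroup.center (TwistedQuotient g n q) := by
  have hpow : meridian g n q ^ (q : ℤ) = 1 :=
    (zpow_natCast _ _).trans (meridian_pow_eq_one g n q)
  exact mem_of_zpow_mem_of_isCoprime _ hnq (meridian_zpow_mem_center g n q) (hpow ▸ one_mem _)

theorem proj_comp_inl_surjective :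
    Function.Surjective ((proj g n q).comp (MonoidHom.inl G (Multiplicative ℤ))) := by
  intro y
  obtain ⟨⟨x, m⟩, rfl⟩ := proj_surjective g n q y
  refine ⟨x * g ^ (-n * m.toAdd), ?_⟩
  calc
    proj g n q (x * g ^ (-n * m.toAdd), 1)
      = proj g n q (x, 1) * proj g n q (g ^ (-n * m.toAdd), 1) := by
        rw [← map_mul, Prod.mk_mul_mk, mul_one]
    _ = proj g n q (x, 1) * proj g n q (1, m) := by
        rw [proj_zpow_one, ← proj_one_ofAdd, ofAdd_toAdd]
    _ = proj g n q (x, m) := by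
        rw [← map_mul, Prod.mk_mul_mk, mul_one, one_mul]

variable {g}

theorem normalClosure_meridian_eq_top (hg : Subgroup.normalClosure {g} = ⊤) :
    Subgroup.normalClosure {meridian g n q} = ⊤ := by
  have hmap := Subgroup.map_normalClosure {g} _ (proj_comp_inl_surjective g n q)
  rw [hg, Subgroup.map_top_of_surjective _ (proj_comp_inl_surjective g n q),
    Set.image_singleton] at hmap
  exact hmap.symm

variable {n q}

theorem zpowers_meridian_eq_top (hg : Subgroup.normalClosure {g} = ⊤) (hnq : IsCoprime n q) :
    Subgroup.zpowers (meridian g n q) = ⊤ := by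
  rw [← normalClosure_singleton_eq_zpowers (meridian_mem_center g hnq),
    normalClosure_meridian_eq_top n q hg]

theorem exists_hom_map_meridian (n : ℤ) (χ : G →* Multiplicative (ZMod q))
    (hχ : χ g = Multiplicative.ofAdd 1) :
    ∃ φ : TwistedQuotient g n q →* Multiplicative (ZMod q),
      φ (meridian g n q) = Multiplicative.ofAdd 1 := by
  let f : G × Multiplicative ℤ →* Multiplicative (ZMod q) :=
    χ.coprod (zpowersHom _ (χ g ^ (-n)))
  have hf_pow : f (g ^ (q : ℤ), 1) = 1 := by
    simp [f, hχ, ← ofAdd_nsmul]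
  have hf_twist : f (g ^ n, Multiplicative.ofAdd 1) = 1 := by
    simp [f]
  refine ⟨QuotientGroup.lift _ f (Subgroup.normalClosure_le_normal ?_), ?_⟩
  · rintro _ (rfl | rfl)
    exacts [hf_pow, hf_twist]
  · change f (g, 1) = _
    simp [f, hχ]

end TwistedQuotient

theorem quotient_by_normalClosure_twisted_relators_finite_cyclic_general
    {G : Type*} [Group G] {g : G} (hg : Subgroup.normalClosure {g} = ⊤) {n : ℤ} {q : ℕ}
    (hnq : IsCoprime n q) (χ : G →* Multiplicative (ZMod q))
    (hχ : χ g = Multiplicative.ofAdd 1) :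
    ∃ e : TwistedQuotient g n q ≃* Multiplicative (ZMod q),
      e (TwistedQuotient.meridian g n q) = Multiplicative.ofAdd 1 := by
  obtain ⟨φ, hφ⟩ := TwistedQuotient.exists_hom_map_meridian n χ hχ
  have hbij : Function.Bijective φ :=
    bijective_of_map_generator_eq_ofAdd_one φ (TwistedQuotient.zpowers_meridian_eq_top hg hnq)
      (TwistedQuotient.meridian_pow_eq_one g n q) hφ
  exact ⟨MulEquiv.ofBijective φ hbij, hφ⟩

/-- If `g` normally generates `G` and the abelianization of `G` is
infinite cyclic generated by the image of `g`, `P = G × ℤ` with central generator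
`z` of the `ℤ` factor, `p, k` integers and `q` a positive integer with
`gcd(p+k, q) = 1`, and `N` is the normal closure in `P` of `g^q` and `g^{p+k}·z`,
then `P/N` is cyclic of order `q`, generated by the image of `g`. -/
theorem quotient_by_normalClosure_twisted_relators_finite_cyclic
    {G : Type*} [Group G] (g : G)
    (hN : Subgroup.normalClosure ({g} : Set G) = ⊤)
    (hA : ∃ e : Abelianization G ≃* Multiplicative ℤ,
      e (Abelianization.of g) = Multiplicative.ofAdd 1)
    (p k : ℤ) (q : ℕ) (hq : 0 < q) (hpkq : Int.gcd (p + k) q = 1) :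
    ∃ e : ((G × Multiplicative ℤ) ⧸
        Subgroup.normalClosure
          ({((g ^ (q : ℤ), (1 : Multiplicative ℤ)) : G × Multiplicative ℤ),
            ((g ^ (p + k), Multiplicative.ofAdd (1 : ℤ)) : G × Multiplicative ℤ)} :
            Set (G × Multiplicative ℤ))) ≃* Multiplicative (ZMod q),
      e (QuotientGroup.mk ((g, (1 : Multiplicative ℤ)) : G × Multiplicative ℤ)) =
        Multiplicative.ofAdd (1 : ZMod q) := by
  obtain ⟨a, ha⟩ := hA
  exact quotient_by_normalClosure_twisted_relators_finite_cyclic_general hN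
    (Int.isCoprime_iff_gcd_eq_one.mpr hpkq)
    ((Int.castAddHom (ZMod q)).toMultiplicative.comp (a.toMonoidHom.comp Abelianization.of))
    (by simp [ha])
end

section
/- Fix positive integers m and n. Consider the group presented with generators a₁, a₂, a₃, a₄, c, e, ν₁, …, ν_m, μ₁, …, μ_n and relators: the commutators [μ_j, ν_i] for all i, j; c·[a₁,a₂]^{-1}; c·(μ_n⋯μ₂μ₁)^{-1}; the commutators [c, ν_i]; e·[a₃,a₄]^{-1}; e·(ν_m⋯ν₂ν₁)^{-1}; the commutators [e, μ_j]; the commutators [a₁, ν_i]; a₂ν_i a₂^{-1} ν_{i+1}^{-1} for 1 ≤ i ≤ m−1; a₂ν_m a₂^{-1}·((ν_m⋯ν₁)ν₁(ν_m⋯ν₁)^{-1})^{-1}; the commutators [a₄, μ_j]; a₃μ_j a₃^{-1} μ_{j+1}^{-1} for 1 ≤ j ≤ n−1; a₃μ_n a₃^{-1}·((μ_n⋯μ₁)μ₁(μ_n⋯μ₁)^{-1})^{-1}; together with the additional relators a₁, a₂, a₃, a₄, c, e (i.e., these six generators are killed). The resulting group is isomorphic to (ℤ/mℤ) × (ℤ/nℤ),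 generated by the images of ν₁ (of order m) and μ₁ (of order n). -/
open scoped commutatorElement

/-!
Killing the six generators `a₁, a₂, a₃, a₄, c, e` turns the conjugation relators into
`νᵢ = νᵢ₊₁` and `μⱼ = μⱼ₊₁`, so the group is generated by one `ν` and one `μ`. What remains of the
other relators is `νᵐ = 1`, `μⁿ = 1` and `[μ, ν] = 1`. Stated for the image of the relators under
an arbitrary homomorphism, this collapse gives both a map from the presented group to `ℤ/m × ℤ/n`
and, through the universal property of the latter, its inverse.
-/

theorem apply_eq_apply_zero_of_forall_succ {α : Type*} {k : ℕ} (hk : 0 < k) {x : Fin k → α}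
    (hx : ∀ (i : Fin k) (hi : (i : ℕ) + 1 < k), x i = x ⟨i + 1, hi⟩) (i : Fin k) :
    x i = x ⟨0, hk⟩ := by
  obtain ⟨i, hi⟩ := i
  induction i with
  | zero => rfl
  | succ j ih => exact (hx ⟨j, by omega⟩ hi).symm.trans (ih _)

section DescendingProd

variable {M N : Type*} [Monoid M] [Monoid N]

/-- The product `x_k ⋯ x₂ x₁` of a finite sequence in decreasing order of the indices. For the
families `μ` and `ν` this is the word that the relators equate with `c` and `e`. -/
def descendingProd {k : ℕ} (x : Fin k → M) : M :=
  (List.ofFn x).reverse.prod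

theorem map_descendingProd (f : M →* N) {k : ℕ} (x : Fin k → M) :
    f (descendingProd x) = descendingProd fun i => f (x i) := by
  simp [descendingProd, map_list_prod, Function.comp_def]

theorem descendingProd_eq_pow {k : ℕ} {x : Fin k → M} {g : M} (hx : ∀ i, x i = g) :
    descendingProd x = g ^ k := by
  obtain rfl : x = fun _ => g := funext hx
  simp [descendingProd]

end DescendingProd

theorem mem_zpowers_ofAdd_one (k : ℕ) (z : Multiplicative (ZMod k)) :
    z ∈ Subgroup.zpowers (Multiplicative.ofAdd (1 : ZMod k)) := by
  obtain ⟨l, hl⟩ := ZMod.intCast_surjective z.toAdd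
  exact ⟨l, by simp [← ofAdd_zsmul, hl]⟩

theorem orderOf_ofAdd_one (k : ℕ) : orderOf (Multiplicative.ofAdd (1 : ZMod k)) = k := by
  rw [orderOf_ofAdd_eq_addOrderOf, ZMod.addOrderOf_one]

section Group

variable {G H : Type*} [Group G] [Group H]

theorem exists_presentedGroup_mulEquiv {α : Type*} {rels : Set (FreeGroup α)} {F : α → H}
    (hF : ∀ r ∈ rels, FreeGroup.lift F r = 1) (hgen : Subgroup.closure (Set.range F) = ⊤)
    (ψ : H →* PresentedGroup rels) (hψ : ∀ s, ψ (F s) = PresentedGroup.of s) :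
    ∃ φ : PresentedGroup rels ≃* H, ∀ s, φ (PresentedGroup.of s) = F s := by
  have hφ (s : α) : PresentedGroup.toGroup hF (PresentedGroup.of s) = F s :=
    PresentedGroup.toGroup.of hF
  refine ⟨(PresentedGroup.toGroup hF).toMulEquiv ψ ?_ ?_, hφ⟩
  · ext s
    simp [hφ, hψ]
  · refine MonoidHom.eq_of_eqOn_dense hgen ?_
    rintro _ ⟨s, rfl⟩
    simp [hφ, hψ]

section CyclicProd

open Subgroup (zpowers)

variable {A B : Type*} [Group A] [Group B] {a : A} {b : B}

theorem closure_pair_prod_eq_top (ha : ∀ z, z ∈ zpowers a) (hb : ∀ z, z ∈ zpowers b) :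
    Subgroup.closure {((a, 1) : A × B), (1, b)} = ⊤ := by
  rw [eq_top_iff]
  rintro ⟨u, v⟩ -
  obtain ⟨k, rfl⟩ := ha u
  obtain ⟨l, rfl⟩ := hb v
  have hleft : ((a, 1) : A × B) ∈ Subgroup.closure {(a, 1), (1, b)} :=
    Subgroup.subset_closure (by simp)
  have hright : ((1, b) : A × B) ∈ Subgroup.closure {(a, 1), (1, b)} :=
    Subgroup.subset_closure (by simp)
  simpa using mul_mem (zpow_mem hleft k) (zpow_mem hright l)

theorem exists_monoidHom_prod_of_commute (ha : ∀ z, z ∈ zpowers a) (hb : ∀ z, z ∈ zpowers b)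
    {x y : G} (hx : x ^ orderOf a = 1) (hy : y ^ orderOf b = 1) (hxy : Commute x y) :
    ∃ ψ : A × B →* G, ψ (a, 1) = x ∧ ψ (1, b) = y := by
  let f := monoidHomOfForallMemZpowers ha (orderOf_dvd_of_pow_eq_one hx)
  let g := monoidHomOfForallMemZpowers hb (orderOf_dvd_of_pow_eq_one hy)
  have hf : f a = x := monoidHomOfForallMemZpowers_apply_gen ha _
  have hg : g b = y := monoidHomOfForallMemZpowers_apply_gen hb _
  have hfg (u : A) (v : B) : Commute (f u) (g v) := by
    obtain ⟨k, rfl⟩ := ha u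
    obtain ⟨l, rfl⟩ := hb v
    simpa only [map_zpow, hf, hg] using hxy.zpow_zpow k l
  exact ⟨f.noncommCoprod g hfg, by simp [hf], by simp [hg]⟩

end CyclicProd

/-- The relators of `π₁(N − 𝒯_{mn})` together with those killing `a₁, a₂, a₃, a₄, c, e`, evaluated
at elements of an arbitrary group. The six killed generators are `a 0, …, a 5` in this order, and
the families `ν` and `μ` are indexed from zero. -/
def braidedToriRelators {m n : ℕ} (hm : 0 < m) (hn : 0 < n)
    (a : Fin 6 → G) (ν : Fin m → G) (μ : Fin n → G) : Set G :=
  { r | (∃ i j, r = ⁅μ j, ν i⁆) ∨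
      r = a 4 * ⁅a 0, a 1⁆⁻¹ ∨
      r = a 4 * (descendingProd μ)⁻¹ ∨
      (∃ i, r = ⁅a 4, ν i⁆) ∨
      r = a 5 * ⁅a 2, a 3⁆⁻¹ ∨
      r = a 5 * (descendingProd ν)⁻¹ ∨
      (∃ j, r = ⁅a 5, μ j⁆) ∨
      (∃ i, r = ⁅a 0, ν i⁆) ∨
      (∃ (i : Fin m) (h : (i : ℕ) + 1 < m), r = a 1 * ν i * (a 1)⁻¹ * (ν ⟨i + 1, h⟩)⁻¹) ∨
      r = a 1 * ν ⟨m - 1, Nat.sub_lt hm Nat.one_pos⟩ * (a 1)⁻¹ *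
        (descendingProd ν * ν ⟨0, hm⟩ * (descendingProd ν)⁻¹)⁻¹ ∨
      (∃ j, r = ⁅a 3, μ j⁆) ∨
      (∃ (j : Fin n) (h : (j : ℕ) + 1 < n), r = a 2 * μ j * (a 2)⁻¹ * (μ ⟨j + 1, h⟩)⁻¹) ∨
      r = a 2 * μ ⟨n - 1, Nat.sub_lt hn Nat.one_pos⟩ * (a 2)⁻¹ *
        (descendingProd μ * μ ⟨0, hn⟩ * (descendingProd μ)⁻¹)⁻¹ ∨
      ∃ t, r = a t }

section Relators

variable {m n : ℕ} {hm : 0 < m} {hn : 0 < n} {a : Fin 6 → G} {ν : Fin m → G} {μ : Fin n → G}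

theorem map_eq_one_of_mem_braidedToriRelators (f : G →* H) {x y : H}
    (hx : x ^ m = 1) (hy : y ^ n = 1) (hxy : Commute x y)
    (ha : ∀ t, f (a t) = 1) (hν : ∀ i, f (ν i) = x) (hμ : ∀ j, f (μ j) = y) :
    ∀ r ∈ braidedToriRelators hm hn a ν μ, f r = 1 := by
  have hνprod : f (descendingProd ν) = 1 := by
    rw [map_descendingProd, descendingProd_eq_pow hν, hx]
  have hμprod : f (descendingProd μ) = 1 := by
    rw [map_descendingProd, descendingProd_eq_pow hμ, hy]
  have hyx : ⁅y, x⁆ = 1 := commutatorElement_eq_one_iff_commute.mpr hxy.symm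
  rintro r (⟨i, j, rfl⟩ | rfl | rfl | ⟨i, rfl⟩ | rfl | rfl | ⟨j, rfl⟩ | ⟨i, rfl⟩ |
    ⟨i, h, rfl⟩ | rfl | ⟨j, rfl⟩ | ⟨j, h, rfl⟩ | rfl | ⟨t, rfl⟩) <;>
  simp [map_commutatorElement, ha, hν, hμ, hνprod, hμprod, hyx]

theorem exists_commute_pow_eq_one_of_map_braidedToriRelators (f : G →* H)
    (hf : ∀ r ∈ braidedToriRelators hm hn a ν μ, f r = 1) :
    ∃ x y : H, x ^ m = 1 ∧ y ^ n = 1 ∧ Commute x y ∧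
      (∀ t, f (a t) = 1) ∧ (∀ i, f (ν i) = x) ∧ ∀ j, f (μ j) = y := by
  simp only [braidedToriRelators, Set.mem_ofPred_eq, or_imp, forall_and, forall_exists_index,
    forall_eq] at hf
  obtain ⟨hcomm, -, hμprod, -, -, hνprod, -, -, hνsucc, -, -, hμsucc, -, hkill⟩ := hf
  have ha (t : Fin 6) : f (a t) = 1 := hkill _ t rfl
  have hν : ∀ i, f (ν i) = f (ν ⟨0, hm⟩) :=
    apply_eq_apply_zero_of_forall_succ hm fun i hi => by
      simpa [ha, mul_inv_eq_one] using hνsucc _ i hi rfl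
  have hμ : ∀ j, f (μ j) = f (μ ⟨0, hn⟩) :=
    apply_eq_apply_zero_of_forall_succ hn fun j hj => by
      simpa [ha, mul_inv_eq_one] using hμsucc _ j hj rfl
  refine ⟨f (ν ⟨0, hm⟩), f (μ ⟨0, hn⟩), ?_, ?_, ?_, ha, hν, hμ⟩
  · simpa [ha, map_descendingProd, descendingProd_eq_pow hν] using hνprod
  · simpa [ha, map_descendingProd, descendingProd_eq_pow hμ] using hμprod
  · have hμν := hcomm _ ⟨0, hm⟩ ⟨0, hn⟩ rfl
    rw [map_commutatorElement, commutatorElement_eq_one_iff_commute] at hμν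
    exact hμν.symm

end Relators

end Group

section Presentation

variable {m n : ℕ}

variable (m n) in
/-- The images of the generators in `ℤ/m × ℤ/n`: all `νᵢ` go to the first standard generator, all
`μⱼ` to the second, and the killed generators to the identity. -/
def meridianClass :
    Fin 6 ⊕ Fin m ⊕ Fin n → Multiplicative (ZMod m) × Multiplicative (ZMod n) :=
  Sum.elim (fun _ => 1) (Sum.elim (fun _ => (.ofAdd 1, 1)) fun _ => (1, .ofAdd 1))

theorem closure_range_meridianClass_eq_top (hm : 0 < m) (hn : 0 < n) :
    Subgroup.closure (Set.range (meridianClass m n)) = ⊤ := by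
  refine top_unique <| (closure_pair_prod_eq_top (mem_zpowers_ofAdd_one m)
    (mem_zpowers_ofAdd_one n)).ge.trans (Subgroup.closure_mono ?_)
  rintro _ (rfl | rfl)
  exacts [⟨.inr (.inl ⟨0, hm⟩), rfl⟩, ⟨.inr (.inr ⟨0, hn⟩), rfl⟩]

variable (hm : 0 < m) (hn : 0 < n)

/-- The relators of the presentation, as words in the free generators: `Sum.inl` carries
`a₁, a₂, a₃, a₄, c, e`, and `Sum.inr` the `νᵢ` followed by the `μⱼ`. -/
def braidedToriWords : Set (FreeGroup (Fin 6 ⊕ Fin m ⊕ Fin n)) :=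
  braidedToriRelators hm hn (fun t => .of (.inl t)) (fun i => .of (.inr (.inl i)))
    fun j => .of (.inr (.inr j))

theorem lift_meridianClass_eq_one :
    ∀ r ∈ braidedToriWords hm hn, FreeGroup.lift (meridianClass m n) r = 1 := by
  refine map_eq_one_of_mem_braidedToriRelators _
    (x := (.ofAdd 1, 1)) (y := (1, .ofAdd 1)) ?_ ?_ (.prod (.one_right _) (.one_left _)) ?_ ?_ ?_
  · simp [← ofAdd_nsmul]
  · simp [← ofAdd_nsmul]
  all_goals simp [meridianClass]

theorem exists_monoidHom_meridianClass_eq_of :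
    ∃ ψ : Multiplicative (ZMod m) × Multiplicative (ZMod n) →*
        PresentedGroup (braidedToriWords hm hn),
      ∀ s, ψ (meridianClass m n s) = PresentedGroup.of s := by
  obtain ⟨x, y, hx, hy, hxy, ha, hν, hμ⟩ :=
    exists_commute_pow_eq_one_of_map_braidedToriRelators
      (PresentedGroup.mk (braidedToriWords hm hn)) fun _ => PresentedGroup.one_of_mem
  obtain ⟨ψ, hψν, hψμ⟩ := exists_monoidHom_prod_of_commute
    (mem_zpowers_ofAdd_one m) (mem_zpowers_ofAdd_one n)
    (by rwa [orderOf_ofAdd_one]) (by rwa [orderOf_ofAdd_one]) hxy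
  refine ⟨ψ, ?_⟩
  rintro (t | i | j)
  exacts [(map_one ψ).trans (ha t).symm, hψν.trans (hν i).symm, hψμ.trans (hμ j).symm]

end Presentation

/-- The presentation of `π₁(N − 𝒯_{mn})` from Proposition 4.7, with the
generators `a₁, a₂, a₃, a₄, c, e` (encoded as `Sum.inl 0, …, Sum.inl 5`) additionally
killed, yields a group isomorphic to `ℤ/m × ℤ/n`, generated by the images of `ν₁`
(generating the `ℤ/m` factor) and `μ₁` (generating the `ℤ/n` factor).
Here `νᵢ` is `Sum.inr (Sum.inl i)` and `μⱼ` is `Sum.inr (Sum.inr j)`. -/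
theorem presented_group_braided_tori_iso_zm_zn
    (m n : ℕ) (hm : 0 < m) (hn : 0 < n)
    (R : Set (FreeGroup (Fin 6 ⊕ Fin m ⊕ Fin n)))
    (hR : R = { r : FreeGroup (Fin 6 ⊕ Fin m ⊕ Fin n) |
      -- [μ_j, ν_i] for all i, j
      (∃ (i : Fin m) (j : Fin n),
        r = ⁅(FreeGroup.of (Sum.inr (Sum.inr j)) : FreeGroup (Fin 6 ⊕ Fin m ⊕ Fin n)),
             FreeGroup.of (Sum.inr (Sum.inl i))⁆) ∨
      -- c · [a₁, a₂]⁻¹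
      r = FreeGroup.of (Sum.inl 4 : Fin 6 ⊕ Fin m ⊕ Fin n) *
          (⁅(FreeGroup.of (Sum.inl 0) : FreeGroup (Fin 6 ⊕ Fin m ⊕ Fin n)),
            FreeGroup.of (Sum.inl 1)⁆)⁻¹ ∨
      -- c · (μ_n ⋯ μ₂ μ₁)⁻¹
      r = FreeGroup.of (Sum.inl 4 : Fin 6 ⊕ Fin m ⊕ Fin n) *
          ((List.ofFn fun j : Fin n =>
            FreeGroup.of (Sum.inr (Sum.inr j) : Fin 6 ⊕ Fin m ⊕ Fin n)).reverse.prod)⁻¹ ∨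
      -- [c, ν_i]
      (∃ i : Fin m,
        r = ⁅(FreeGroup.of (Sum.inl 4) : FreeGroup (Fin 6 ⊕ Fin m ⊕ Fin n)),
             FreeGroup.of (Sum.inr (Sum.inl i))⁆) ∨
      -- e · [a₃, a₄]⁻¹
      r = FreeGroup.of (Sum.inl 5 : Fin 6 ⊕ Fin m ⊕ Fin n) *
          (⁅(FreeGroup.of (Sum.inl 2) : FreeGroup (Fin 6 ⊕ Fin m ⊕ Fin n)),
            FreeGroup.of (Sum.inl 3)⁆)⁻¹ ∨
      -- e · (ν_m ⋯ ν₂ ν₁)⁻¹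
      r = FreeGroup.of (Sum.inl 5 : Fin 6 ⊕ Fin m ⊕ Fin n) *
          ((List.ofFn fun i : Fin m =>
            FreeGroup.of (Sum.inr (Sum.inl i) : Fin 6 ⊕ Fin m ⊕ Fin n)).reverse.prod)⁻¹ ∨
      -- [e, μ_j]
      (∃ j : Fin n,
        r = ⁅(FreeGroup.of (Sum.inl 5) : FreeGroup (Fin 6 ⊕ Fin m ⊕ Fin n)),
             FreeGroup.of (Sum.inr (Sum.inr j))⁆) ∨
      -- [a₁, ν_i]
      (∃ i : Fin m,
        r = ⁅(FreeGroup.of (Sum.inl 0) : FreeGroup (Fin 6 ⊕ Fin m ⊕ Fin n)),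
             FreeGroup.of (Sum.inr (Sum.inl i))⁆) ∨
      -- a₂ ν_i a₂⁻¹ ν_{i+1}⁻¹  (1 ≤ i ≤ m−1)
      (∃ i : Fin m, ∃ h : (i : ℕ) + 1 < m,
        r = FreeGroup.of (Sum.inl 1 : Fin 6 ⊕ Fin m ⊕ Fin n) *
            FreeGroup.of (Sum.inr (Sum.inl i)) *
            (FreeGroup.of (Sum.inl 1 : Fin 6 ⊕ Fin m ⊕ Fin n))⁻¹ *
            (FreeGroup.of (Sum.inr (Sum.inl ⟨(i : ℕ) + 1, h⟩) : Fin 6 ⊕ Fin m ⊕ Fin n))⁻¹) ∨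
      -- a₂ ν_m a₂⁻¹ · ((ν_m⋯ν₁) ν₁ (ν_m⋯ν₁)⁻¹)⁻¹
      r = FreeGroup.of (Sum.inl 1 : Fin 6 ⊕ Fin m ⊕ Fin n) *
          FreeGroup.of (Sum.inr (Sum.inl ⟨m - 1, Nat.sub_lt hm Nat.one_pos⟩)) *
          (FreeGroup.of (Sum.inl 1 : Fin 6 ⊕ Fin m ⊕ Fin n))⁻¹ *
          ((List.ofFn fun i : Fin m =>
              FreeGroup.of (Sum.inr (Sum.inl i) : Fin 6 ⊕ Fin m ⊕ Fin n)).reverse.prod *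
            FreeGroup.of (Sum.inr (Sum.inl ⟨0, hm⟩) : Fin 6 ⊕ Fin m ⊕ Fin n) *
            ((List.ofFn fun i : Fin m =>
              FreeGroup.of (Sum.inr (Sum.inl i) : Fin 6 ⊕ Fin m ⊕ Fin n)).reverse.prod)⁻¹)⁻¹ ∨
      -- [a₄, μ_j]
      (∃ j : Fin n,
        r = ⁅(FreeGroup.of (Sum.inl 3) : FreeGroup (Fin 6 ⊕ Fin m ⊕ Fin n)),
             FreeGroup.of (Sum.inr (Sum.inr j))⁆) ∨
      -- a₃ μ_j a₃⁻¹ μ_{j+1}⁻¹  (1 ≤ j ≤ n−1)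
      (∃ j : Fin n, ∃ h : (j : ℕ) + 1 < n,
        r = FreeGroup.of (Sum.inl 2 : Fin 6 ⊕ Fin m ⊕ Fin n) *
            FreeGroup.of (Sum.inr (Sum.inr j)) *
            (FreeGroup.of (Sum.inl 2 : Fin 6 ⊕ Fin m ⊕ Fin n))⁻¹ *
            (FreeGroup.of (Sum.inr (Sum.inr ⟨(j : ℕ) + 1, h⟩) : Fin 6 ⊕ Fin m ⊕ Fin n))⁻¹) ∨
      -- a₃ μ_n a₃⁻¹ · ((μ_n⋯μ₁) μ₁ (μ_n⋯μ₁)⁻¹)⁻¹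
      r = FreeGroup.of (Sum.inl 2 : Fin 6 ⊕ Fin m ⊕ Fin n) *
          FreeGroup.of (Sum.inr (Sum.inr ⟨n - 1, Nat.sub_lt hn Nat.one_pos⟩)) *
          (FreeGroup.of (Sum.inl 2 : Fin 6 ⊕ Fin m ⊕ Fin n))⁻¹ *
          ((List.ofFn fun j : Fin n =>
              FreeGroup.of (Sum.inr (Sum.inr j) : Fin 6 ⊕ Fin m ⊕ Fin n)).reverse.prod *
            FreeGroup.of (Sum.inr (Sum.inr ⟨0, hn⟩) : Fin 6 ⊕ Fin m ⊕ Fin n) *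
            ((List.ofFn fun j : Fin n =>
              FreeGroup.of (Sum.inr (Sum.inr j) : Fin 6 ⊕ Fin m ⊕ Fin n)).reverse.prod)⁻¹)⁻¹ ∨
      -- kill a₁, a₂, a₃, a₄, c, e
      (∃ t : Fin 6, r = FreeGroup.of (Sum.inl t : Fin 6 ⊕ Fin m ⊕ Fin n)) }) :
    ∃ φ : PresentedGroup R ≃* (Multiplicative (ZMod m) × Multiplicative (ZMod n)),
      φ (PresentedGroup.of (Sum.inr (Sum.inl ⟨0, hm⟩))) =
        (Multiplicative.ofAdd (1 : ZMod m), 1) ∧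
      φ (PresentedGroup.of (Sum.inr (Sum.inr ⟨0, hn⟩))) =
        (1, Multiplicative.ofAdd (1 : ZMod n)) := by
  obtain rfl : R = braidedToriWords hm hn := hR
  obtain ⟨ψ, hψ⟩ := exists_monoidHom_meridianClass_eq_of hm hn
  obtain ⟨φ, hφ⟩ := exists_presentedGroup_mulEquiv
    (lift_meridianClass_eq_one hm hn) (closure_range_meridianClass_eq_top hm hn) ψ hψ
  exact ⟨φ, hφ _, hφ _⟩
end

section
/- Fix integers m ≥ 1 and n ≥ 1. Consider the group presented with generators μ₁, …, μ_m, ν₁, …, ν_n and relators: the commutators [μ_i, ν_j] for all 1 ≤ i ≤ m, 1 ≤ j ≤ n; the product μ₁μ₂⋯μ_m; and the product ν₁ν₂⋯ν_n. This presented group is isomorphic to the direct product F_{m−1} × F_{n−1} of a free group of rank m−1 and a free group of rank n−1. -/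
open scoped commutatorElement

/-!
Imposing the commutators of two disjoint families of generators, on top of relators for each family
separately, presents the direct product of the two groups. Here each factor is the group
`⟨x₁, …, x_k | x₁ ⋯ x_k⟩` of a `k`-punctured sphere; its relator expresses `x₁` through the other
generators, so that a Tietze move eliminates `x₁` and leaves a free group on `x₂, …, x_k`.
-/

section DirectProduct

variable {α β : Type*}

/-- The relators on `α ⊕ β` presenting the direct product of the groups presented by `rels₁` on `α`
and `rels₂` on `β`. -/
def directProductRels (rels₁ : Set (FreeGroup α)) (rels₂ : Set (FreeGroup β)) :
    Set (FreeGroup (α ⊕ β)) :=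
  {r | (∃ a b, r = ⁅(FreeGroup.of (Sum.inl a) : FreeGroup (α ⊕ β)), FreeGroup.of (Sum.inr b)⁆) ∨
    r ∈ FreeGroup.map Sum.inl '' rels₁ ∨ r ∈ FreeGroup.map Sum.inr '' rels₂}

lemma commute_map_of_closure_eq_top {G H K : Type*} [Group G] [Group H] [Group K]
    {s : Set G} {t : Set H} (hs : Subgroup.closure s = ⊤) (ht : Subgroup.closure t = ⊤)
    (f : G →* K) (g : H →* K) (hfg : ∀ a ∈ s, ∀ b ∈ t, Commute (f a) (g b)) (x : G) (y : H) :
    Commute (f x) (g y) := by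
  have commute_of_mem_left (a : G) (ha : a ∈ s) : Commute (f a) (g y) := by
    have hy : y ∈ Subgroup.closure t := ht ▸ Subgroup.mem_top y
    induction hy using Subgroup.closure_induction with
    | mem b hb => exact hfg a ha b hb
    | one => simp
    | mul b c _ _ hb hc => simpa using hb.mul_right hc
    | inv b _ hb => simpa using hb
  have hx : x ∈ Subgroup.closure s := hs ▸ Subgroup.mem_top x
  induction hx using Subgroup.closure_induction with
  | mem a ha => exact commute_of_mem_left a ha
  | one => simp
  | mul a b _ _ ha hb => simpa using ha.mul_left hb
  | inv a _ ha => simpa using ha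

variable (rels₁ : Set (FreeGroup α)) (rels₂ : Set (FreeGroup β))

/-- The generators of the direct product of two presented groups, indexed by the disjoint union of
the two generating types. -/
def directProductGenerators : α ⊕ β → PresentedGroup rels₁ × PresentedGroup rels₂ :=
  Sum.elim (fun a => (PresentedGroup.of a, 1)) (fun b => (1, PresentedGroup.of b))

lemma lift_directProductGenerators_comp_map_inl :
    (FreeGroup.lift (directProductGenerators rels₁ rels₂)).comp (FreeGroup.map Sum.inl) =
      (MonoidHom.inl _ _).comp (PresentedGroup.mk rels₁) :=
  FreeGroup.ext_hom _ _ fun _ => rfl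

lemma lift_directProductGenerators_comp_map_inr :
    (FreeGroup.lift (directProductGenerators rels₁ rels₂)).comp (FreeGroup.map Sum.inr) =
      (MonoidHom.inr _ _).comp (PresentedGroup.mk rels₂) :=
  FreeGroup.ext_hom _ _ fun _ => rfl

lemma lift_directProductGenerators_eq_one (r : FreeGroup (α ⊕ β))
    (hr : r ∈ directProductRels rels₁ rels₂) :
    FreeGroup.lift (directProductGenerators rels₁ rels₂) r = 1 := by
  obtain ⟨a, b, rfl⟩ | ⟨r, hr, rfl⟩ | ⟨r, hr, rfl⟩ := hr
  · simp [directProductGenerators, commutatorElement_def]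
  · rw [← MonoidHom.comp_apply, lift_directProductGenerators_comp_map_inl, MonoidHom.comp_apply,
      PresentedGroup.one_of_mem hr, map_one]
  · rw [← MonoidHom.comp_apply, lift_directProductGenerators_comp_map_inr, MonoidHom.comp_apply,
      PresentedGroup.one_of_mem hr, map_one]

/-- The homomorphism from the group presented by `directProductRels` to the direct product, sending
each generator to the corresponding generator of its factor. -/
def directProductRelsToProd :
    PresentedGroup (directProductRels rels₁ rels₂) →*
      PresentedGroup rels₁ × PresentedGroup rels₂ :=
  PresentedGroup.toGroup (lift_directProductGenerators_eq_one rels₁ rels₂)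

/-- The inclusion of the first factor into the group presented by `directProductRels`. -/
def directProductRelsInl :
    PresentedGroup rels₁ →* PresentedGroup (directProductRels rels₁ rels₂) :=
  PresentedGroup.map (FreeGroup.map Sum.inl) fun r hr => Or.inr (Or.inl ⟨r, hr, rfl⟩)

/-- The inclusion of the second factor into the group presented by `directProductRels`. -/
def directProductRelsInr :
    PresentedGroup rels₂ →* PresentedGroup (directProductRels rels₁ rels₂) :=
  PresentedGroup.map (FreeGroup.map Sum.inr) fun r hr => Or.inr (Or.inr ⟨r, hr, rfl⟩)

lemma commute_directProductRelsInl_directProductRelsInr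
    (x : PresentedGroup rels₁) (y : PresentedGroup rels₂) :
    Commute (directProductRelsInl rels₁ rels₂ x) (directProductRelsInr rels₁ rels₂ y) := by
  refine commute_map_of_closure_eq_top (PresentedGroup.closure_range_of rels₁)
    (PresentedGroup.closure_range_of rels₂) _ _ ?_ x y
  rintro _ ⟨a, rfl⟩ _ ⟨b, rfl⟩
  exact commutatorElement_eq_one_iff_commute.mp
    (PresentedGroup.one_of_mem (rels := directProductRels rels₁ rels₂) (Or.inl ⟨a, b, rfl⟩))

/-- The group presented by `directProductRels` is the direct product of the two presented groups. -/
def directProductPresentations :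
    PresentedGroup (directProductRels rels₁ rels₂) ≃*
      PresentedGroup rels₁ × PresentedGroup rels₂ :=
  MonoidHom.toMulEquiv (directProductRelsToProd rels₁ rels₂)
    ((directProductRelsInl rels₁ rels₂).noncommCoprod (directProductRelsInr rels₁ rels₂)
      (commute_directProductRelsInl_directProductRelsInr rels₁ rels₂))
    (PresentedGroup.ext <| Sum.rec
      (fun a => DFunLike.congr_fun (MonoidHom.noncommCoprod_comp_inl _ _ _) (PresentedGroup.of a))
      (fun b => DFunLike.congr_fun (MonoidHom.noncommCoprod_comp_inr _ _ _) (PresentedGroup.of b)))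
    (by
      have toProd_comp_inl : (directProductRelsToProd rels₁ rels₂).comp
          (directProductRelsInl rels₁ rels₂) = MonoidHom.inl _ _ := PresentedGroup.ext fun _ => rfl
      have toProd_comp_inr : (directProductRelsToProd rels₁ rels₂).comp
          (directProductRelsInr rels₁ rels₂) = MonoidHom.inr _ _ := PresentedGroup.ext fun _ => rfl
      simp only [MonoidHom.comp_noncommCoprod, toProd_comp_inl, toProd_comp_inr,
        MonoidHom.noncommCoprod_inl_inr])

end DirectProduct

section GeneratorElimination

variable {α : Type*}

lemma lift_elim_comp_map_some {G : Type*} [Group G] (g : G) (f : α → G) :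
    (FreeGroup.lift fun x : Option α => x.elim g f).comp (FreeGroup.map some) =
      FreeGroup.lift f :=
  FreeGroup.ext_hom _ _ fun _ => by simp

lemma lift_elim_inv_of_none_mul_map_some (w : FreeGroup α) :
    FreeGroup.lift (fun x : Option α => x.elim w⁻¹ FreeGroup.of)
      (FreeGroup.of none * FreeGroup.map some w) = 1 := by
  rw [map_mul, FreeGroup.lift_apply_of, Option.elim_none, ← MonoidHom.comp_apply,
    lift_elim_comp_map_some, FreeGroup.lift_of_apply, inv_mul_cancel]

lemma of_none_eq_inv_mk_map_some (w : FreeGroup α) :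
    (PresentedGroup.of none : PresentedGroup {FreeGroup.of none * FreeGroup.map some w}) =
      (PresentedGroup.mk _ (FreeGroup.map some w))⁻¹ :=
  eq_inv_of_mul_eq_one_left (PresentedGroup.one_of_mem (Set.mem_singleton _))

/-- The Tietze move that eliminates the generator `none` by means of the relator `none * w`, where
`w` is a word in the remaining generators. -/
def generatorEliminationEquiv (w : FreeGroup α) :
    PresentedGroup {FreeGroup.of none * FreeGroup.map some w} ≃* FreeGroup α :=
  MonoidHom.toMulEquiv
    (PresentedGroup.toGroup fun _ hr => hr ▸ lift_elim_inv_of_none_mul_map_some w)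
    ((PresentedGroup.mk _).comp (FreeGroup.map some))
    (PresentedGroup.ext <| Option.rec
      (by simpa using (of_none_eq_inv_mk_map_some w).symm)
      (fun _ => rfl))
    (FreeGroup.ext_hom _ _ fun _ => rfl)

end GeneratorElimination

section PuncturedSphere

/-- The word `x₁ ⋯ x_k`, the only relator of the fundamental group of the sphere with `k` punctures
on the loops `x₁, …, x_k` around the punctures. -/
def puncturedSphereRelator (k : ℕ) : FreeGroup (Fin k) :=
  (List.ofFn FreeGroup.of).prod

lemma map_puncturedSphereRelator {α : Type*} {k : ℕ} (f : Fin k → α) :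
    FreeGroup.map f (puncturedSphereRelator k) =
      (List.ofFn fun i => FreeGroup.of (f i)).prod := by
  simp [puncturedSphereRelator, map_list_prod, List.map_ofFn, Function.comp_def]

lemma map_finSuccEquiv_puncturedSphereRelator (k : ℕ) :
    FreeGroup.map (finSuccEquiv k) (puncturedSphereRelator (k + 1)) =
      FreeGroup.of none * FreeGroup.map some (puncturedSphereRelator k) := by
  simp [map_puncturedSphereRelator, List.ofFn_succ]

/-- The fundamental group of the sphere with `k + 1` punctures is free of rank `k`. -/
def puncturedSphereGroupEquivFreeGroup (k : ℕ) :
    PresentedGroup {puncturedSphereRelator (k + 1)} ≃* FreeGroup (Fin k) :=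
  (PresentedGroup.equivPresentedGroup _ (finSuccEquiv k)).trans <|
    (QuotientGroup.quotientMulEquivOfEq <| by simp [map_finSuccEquiv_puncturedSphereRelator]).trans
      (generatorEliminationEquiv (puncturedSphereRelator k))

end PuncturedSphere

/-- The group presented by generators `μ₁,…,μ_m, ν₁,…,ν_n` and
relators `[μᵢ,νⱼ]` (all `i, j`), `μ₁μ₂⋯μ_m` and `ν₁ν₂⋯ν_n` is isomorphic to the
direct product `F_{m−1} × F_{n−1}` of free groups of ranks `m−1` and `n−1`. -/
theorem presented_group_punctured_spheres_iso_prod_free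
    (m n : ℕ) (hm : 1 ≤ m) (hn : 1 ≤ n)
    (R : Set (FreeGroup (Fin m ⊕ Fin n)))
    (hR : R = { r : FreeGroup (Fin m ⊕ Fin n) |
      (∃ (i : Fin m) (j : Fin n),
        r = ⁅(FreeGroup.of (Sum.inl i) : FreeGroup (Fin m ⊕ Fin n)),
             FreeGroup.of (Sum.inr j)⁆) ∨
      r = (List.ofFn fun i : Fin m => FreeGroup.of (Sum.inl i : Fin m ⊕ Fin n)).prod ∨
      r = (List.ofFn fun j : Fin n => FreeGroup.of (Sum.inr j : Fin m ⊕ Fin n)).prod }) :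
    Nonempty (PresentedGroup R ≃*
      (FreeGroup (Fin (m - 1)) × FreeGroup (Fin (n - 1)))) := by
  obtain ⟨k, rfl⟩ := Nat.exists_eq_add_of_le' hm
  obtain ⟨l, rfl⟩ := Nat.exists_eq_add_of_le' hn
  obtain rfl : R = directProductRels {puncturedSphereRelator (k + 1)}
      {puncturedSphereRelator (l + 1)} := by
    simp only [hR, directProductRels, Set.image_singleton, Set.mem_singleton_iff,
      map_puncturedSphereRelator]
  exact ⟨(directProductPresentations _ _).trans
    ((puncturedSphereGroupEquivFreeGroup k).prodCongr (puncturedSphereGroupEquivFreeGroup l))⟩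
end
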